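/- Let η₁, η₂ : ℂ ∖ [0,+∞) → ℂ ∖ [0,+∞) be analytic functions satisfying: (a) lim_{x↑0, x<0} η_j(x) = 0; (b) π > arg η_j(z) > arg z for all z ∈ ℂ⁺; (c) η_j(conj(z)) = conj(η_j(z)) for all z ∈ ℂ ∖ [0,+∞) (j = 1,2). Define h_j(z) = η_j(z)/z and f(z,w) = h₂(z·h₁(z·w)). Then: (1) f is well defined on (ℂ⁺ ∪ ℝ∖{0}) × ℂ⁺ and takes values in ℂ⁺; (2) there exists a unique analytic self-map h of ℂ⁺ such that f(z, h(z)) = h(z) for all z ∈ ℂ⁺. -/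

import Mathlib

open Complex Filter Set Topology

/-- The open upper half-plane `ℂ⁺ = {z : ℂ | Im z > 0}`. -/
def UHP : Set ℂ := {z : ℂ | 0 < z.im}

/-- The slit plane `ℂ ∖ [0,+∞)`. -/
def SlitP : Set ℂ := {z : ℂ | z.re < 0 ∨ z.im ≠ 0}

/-!
For `z ∈ ℂ⁺` the bound `arg z < arg η z < π` says that `h z = η z / z` lies in the open cone spanned
by `1` and `-conj z`, and by symmetry the same holds on the whole slit plane. Hence
`f_z w = h₂ (z * h₁ (z * w))` preserves the closed cone spanned by `1` and `-conj z` without its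
apex, and the iterates `f_z^[n] 1` are analytic in `z` with values in `ℂ ∖ (-∞, 0]`, so they form a
normal family. For `z < 0` the `h_j` are positive and increasing, because `h_j` and `z * h_j z` map
`ℂ⁺` into itself, and the iterates converge monotonically to a fixed point: `η_j(0-) = 0` traps them
in a compact interval. The limit of the normal family is therefore a fixed point of `f_z` for
`z < 0`, and by the identity theorem for every `z`.

If `f_z` had two fixed points in `ℂ⁺`, the Schwarz lemma would make it the identity there, which is
impossible at `-conj z`: since `z * -conj z < 0`, the number `k = h₁ (z * -conj z)` is real, and
`h₂ (z * k) = -conj z` is only on the boundary of the cone in which it must lie.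
-/

open scoped ComplexConjugate

/-! ### The slit plane and its sectors -/

section Sector

variable {a b x : ℝ} {k w z : ℂ}

lemma neg_mem_slitPlane_iff_mem_slitP : -z ∈ slitPlane ↔ z ∈ SlitP := by
  simp [mem_slitPlane_iff, SlitP]

lemma isOpen_slitP : IsOpen SlitP := by
  simpa [Set.preimage, neg_mem_slitPlane_iff_mem_slitP] using
    isOpen_slitPlane.preimage (continuous_neg (G := ℂ))

lemma isPreconnected_slitP : IsPreconnected SlitP := by
  have hneg : Neg.neg '' slitPlane = SlitP := by
    ext z
    rw [Set.image_neg_eq_neg, Set.mem_neg, neg_mem_slitPlane_iff_mem_slitP]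
  rw [← hneg]
  have hpath : IsPathConnected slitPlane :=
    starConvex_one_slitPlane.isPathConnected one_mem_slitPlane
  exact hpath.isConnected.isPreconnected.image _ continuous_neg.continuousOn

lemma UHP_subset_slitP : UHP ⊆ SlitP := fun _ hz => Or.inr (ne_of_gt hz)

lemma ofReal_mem_slitP (hx : x < 0) : (x : ℂ) ∈ SlitP := Or.inl (by simpa using hx)

lemma conj_mem_slitP (hz : z ∈ SlitP) : conj z ∈ SlitP := by
  simpa [SlitP] using hz

lemma ne_zero_of_mem_slitP (hz : z ∈ SlitP) : z ≠ 0 := by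
  rintro rfl
  simp [SlitP] at hz

/-- The open convex cone spanned by `1` and `-conj z`. For `z ∈ ℂ⁺` this is the sector
`0 < arg w < π - arg z`, so that `h z ∈ openSector z` encodes `arg z < arg (z * h z) < π`. -/
def openSector (z : ℂ) : Set ℂ := {w | ∃ a b : ℝ, 0 < a ∧ 0 < b ∧ w = a - b * conj z}

/-- The closed convex cone spanned by `1` and `-conj z`, its apex `0` included. -/
def closedSector (z : ℂ) : Set ℂ := {w | ∃ a b : ℝ, 0 ≤ a ∧ 0 ≤ b ∧ w = a - b * conj z}

lemma one_mem_closedSector : 1 ∈ closedSector z := ⟨1, 0, zero_le_one, le_rfl, by simp⟩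

lemma sub_mul_conj_re : (a - b * conj z : ℂ).re = a - b * z.re := by simp

lemma sub_mul_conj_im : (a - b * conj z : ℂ).im = b * z.im := by simp

lemma mul_sub_mul_conj_im : (z * (a - b * conj z)).im = a * z.im := by
  rw [mul_im, sub_mul_conj_re, sub_mul_conj_im]
  ring

lemma sub_mul_conj_mem_slitPlane (hz : z ∈ SlitP) (ha : 0 ≤ a) (hb : 0 ≤ b)
    (hab : 0 < a ∨ 0 < b) : (a - b * conj z : ℂ) ∈ slitPlane := by
  rw [mem_slitPlane_iff, sub_mul_conj_re, sub_mul_conj_im]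
  rcases hb.eq_or_lt with rfl | hb
  · exact Or.inl (by simpa using hab)
  · rcases hz with hz | hz
    · exact Or.inl (by nlinarith)
    · exact Or.inr (mul_ne_zero hb.ne' hz)

lemma pos_or_pos_of_sub_mul_conj_ne_zero (ha : 0 ≤ a) (hb : 0 ≤ b)
    (h : (a - b * conj z : ℂ) ≠ 0) : 0 < a ∨ 0 < b := by
  by_contra! hab
  simp [le_antisymm hab.1 ha, le_antisymm hab.2 hb] at h

lemma closedSector_diff_zero_subset_slitPlane (hz : z ∈ SlitP) :
    closedSector z \ {0} ⊆ slitPlane := by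
  rintro _ ⟨⟨a, b, ha, hb, rfl⟩, hw₀⟩
  exact sub_mul_conj_mem_slitPlane hz ha hb (pos_or_pos_of_sub_mul_conj_ne_zero ha hb hw₀)

lemma openSector_subset_slitPlane (hz : z ∈ SlitP) : openSector z ⊆ slitPlane := by
  rintro _ ⟨a, b, ha, hb, rfl⟩
  exact sub_mul_conj_mem_slitPlane hz ha.le hb.le (Or.inl ha)

lemma openSector_subset_UHP (hz : z ∈ UHP) : openSector z ⊆ UHP := by
  rintro _ ⟨a, b, -, hb, rfl⟩
  simpa [UHP] using mul_pos hb hz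

lemma im_nonneg_of_mem_closedSector (hz : z ∈ UHP) (hw : w ∈ closedSector z) : 0 ≤ w.im := by
  obtain ⟨a, b, -, hb, rfl⟩ := hw
  simpa using mul_nonneg hb (le_of_lt hz)

lemma mul_mem_slitP_of_mem_closedSector (hz : z ∈ SlitP) (hw : w ∈ closedSector z \ {0}) :
    z * w ∈ SlitP := by
  obtain ⟨⟨a, b, ha, hb, rfl⟩, hw₀⟩ := hw
  have hzn : 0 < normSq z := normSq_pos.2 (ne_zero_of_mem_slitP hz)
  have hneg : -(z * (a - b * conj z)) = (b * normSq z : ℝ) - a * conj (conj z) := by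
    push_cast
    rw [normSq_eq_conj_mul_self, conj_conj]
    ring
  rw [← neg_mem_slitPlane_iff_mem_slitP, hneg]
  refine sub_mul_conj_mem_slitPlane (conj_mem_slitP hz) (by positivity) ha ?_
  exact (pos_or_pos_of_sub_mul_conj_ne_zero ha hb hw₀).symm.imp_left (mul_pos · hzn)

lemma openSector_mul_subset_closedSector (hw : w ∈ closedSector z) :
    openSector (z * w) ⊆ closedSector z := by
  obtain ⟨a, b, ha, hb, rfl⟩ := hw
  rintro _ ⟨c, d, hc, hd, rfl⟩
  have hzn : 0 ≤ normSq z := normSq_nonneg z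
  refine ⟨c + d * (b * normSq z), d * a, by positivity, by positivity, ?_⟩
  push_cast
  simp only [map_mul, map_sub, conj_ofReal, conj_conj]
  rw [normSq_eq_conj_mul_self]
  ring

lemma mul_mem_UHP_of_mem_openSector (hz : z ≠ 0) (hzi : 0 ≤ z.im) (hwi : 0 ≤ w.im)
    (hzw : 0 < z.im ∨ 0 < w.im) (hk : k ∈ openSector (z * w)) : z * k ∈ UHP := by
  obtain ⟨a, b, ha, hb, rfl⟩ := hk
  have hzn : 0 < normSq z := normSq_pos.2 hz
  have him : (z * (a - b * conj (z * w))).im = a * z.im + b * normSq z * w.im := by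
    rw [mul_im, sub_mul_conj_re, sub_mul_conj_im, mul_re, mul_im, normSq_apply]
    ring
  rw [UHP, Set.mem_ofPred_eq, him]
  rcases hzw with h | h <;> positivity

lemma mul_mem_slitP_of_mem_UHP (hz : z ≠ 0) (hzi : 0 ≤ z.im) (hw : w ∈ UHP) :
    z * w ∈ SlitP := by
  by_contra hzw
  simp only [SlitP, Set.mem_ofPred_eq, not_or, not_lt, not_not] at hzw
  have hle : normSq z * w.im ≤ 0 := calc
    normSq z * w.im = z.re * (z * w).im - z.im * (z * w).re := by
      rw [normSq_apply, mul_im, mul_re]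
      ring
    _ ≤ 0 := by
      rw [hzw.2]
      nlinarith [mul_nonneg hzi hzw.1]
  exact hle.not_gt (mul_pos (normSq_pos.2 hz) hw)

lemma eq_sub_mul_conj_of_im_ne_zero (hz : z.im ≠ 0) :
    w = ((z * w).im / z.im : ℝ) - (w.im / z.im : ℝ) * conj z := by
  apply Complex.ext
  · rw [sub_mul_conj_re, mul_im]
    field_simp
    ring
  · rw [sub_mul_conj_im, div_mul_cancel₀ _ hz]

lemma mem_closedSector_iff_of_im_ne_zero (hz : z.im ≠ 0) :
    w ∈ closedSector z ↔ 0 ≤ (z * w).im / z.im ∧ 0 ≤ w.im / z.im := by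
  constructor
  · rintro ⟨a, b, ha, hb, rfl⟩
    rw [mul_sub_mul_conj_im, sub_mul_conj_im, mul_div_cancel_right₀ _ hz,
      mul_div_cancel_right₀ _ hz]
    exact ⟨ha, hb⟩
  · rintro ⟨ha, hb⟩
    exact ⟨_, _, ha, hb, eq_sub_mul_conj_of_im_ne_zero hz⟩

lemma mem_openSector_iff_of_mem_UHP (hz : z ∈ UHP) :
    w ∈ openSector z ↔ 0 < (z * w).im ∧ 0 < w.im := by
  constructor
  · rintro ⟨a, b, ha, hb, rfl⟩
    rw [mul_sub_mul_conj_im, sub_mul_conj_im]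
    exact ⟨mul_pos ha hz, mul_pos hb hz⟩
  · rintro ⟨ha, hb⟩
    exact ⟨_, _, div_pos ha hz, div_pos hb hz, eq_sub_mul_conj_of_im_ne_zero (ne_of_gt hz)⟩

lemma conj_mem_openSector_conj (hw : w ∈ openSector z) : conj w ∈ openSector (conj z) := by
  obtain ⟨a, b, ha, hb, rfl⟩ := hw
  exact ⟨a, b, ha, hb, by simp⟩

lemma mem_openSector_ofReal_iff (hx : x < 0) :
    w ∈ openSector x ↔ 0 < w.re ∧ w.im = 0 := by
  constructor
  · rintro ⟨a, b, ha, hb, rfl⟩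
    simpa using (mul_neg_of_pos_of_neg hb hx).trans ha
  · rintro ⟨hre, him⟩
    have hx₀ : x ≠ 0 := hx.ne
    refine ⟨w.re / 2, -w.re / (2 * x), by positivity,
      div_pos_of_neg_of_neg (by linarith) (by linarith), Complex.ext ?_ ?_⟩
    · rw [sub_mul_conj_re, ofReal_re]
      field_simp
      ring
    · rw [sub_mul_conj_im, ofReal_im, mul_zero, him]

lemma mem_closedSector_ofReal_iff (hx : x < 0) :
    w ∈ closedSector x ↔ 0 ≤ w.re ∧ w.im = 0 := by
  constructor
  · rintro ⟨a, b, ha, hb, rfl⟩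
    simpa using (mul_nonpos_of_nonneg_of_nonpos hb hx.le).trans ha
  · rintro ⟨hre, him⟩
    exact ⟨w.re, 0, hre, le_rfl, by apply Complex.ext <;> simp [him]⟩

lemma isClosed_closedSector (hz : z ∈ SlitP) : IsClosed (closedSector z) := by
  by_cases him : z.im = 0
  · lift z to ℝ using him
    have hz' : z < 0 := by simpa [SlitP] using hz
    simp_rw [Set.ext_iff.2 fun w => mem_closedSector_ofReal_iff (w := w) hz']
    exact (isClosed_le continuous_const continuous_re).inter
      (isClosed_eq continuous_im continuous_const)
  · have hset : closedSector z = {w | 0 ≤ (z * w).im / z.im} ∩ {w | 0 ≤ w.im / z.im} :=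
      Set.ext fun w => mem_closedSector_iff_of_im_ne_zero him
    rw [hset]
    exact (isClosed_le continuous_const (by fun_prop)).inter
      (isClosed_le continuous_const (by fun_prop))

end Sector

/-! ### Sectorial functions -/

/-- The properties of `h z = η z / z` that drive the argument, for `η` as in the theorem. -/
structure IsSectorial (h : ℂ → ℂ) : Prop where
  differentiableOn : DifferentiableOn ℂ h SlitP
  mem_openSector : ∀ z ∈ SlitP, h z ∈ openSector z
  tendsto_mul : Tendsto (fun x : ℝ => (x : ℂ) * h x) (𝓝[<] 0) (𝓝 0)

/-- The map `f(z, w) = h₂ (z * h₁ (z * w))`, also used with real `h₁` and `h₂` on the negative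
axis. -/
def subordinationMap {K : Type*} [Mul K] (h₁ h₂ : K → K) (z w : K) : K := h₂ (z * h₁ (z * w))

section Sectorial

variable {h h₁ h₂ η u v : ℂ → ℂ} {z w : ℂ} {U : Set ℂ}

lemma im_pos_of_arg_mem_Ioo (hw : w.arg ∈ Ioo 0 Real.pi) : 0 < w.im := by
  have hw₀ : w ≠ 0 := by
    rintro rfl
    simp at hw
  rw [← norm_mul_sin_arg]
  exact mul_pos (norm_pos_iff.2 hw₀) (Real.sin_pos_of_mem_Ioo hw)

lemma im_div_pos_of_arg_sub_arg_mem_Ioo (hz : z ≠ 0) (hw : w ≠ 0)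
    (hzw : w.arg - z.arg ∈ Ioo 0 Real.pi) : 0 < (w / z).im := by
  have him : (w / z).im = ‖w‖ * ‖z‖ * Real.sin (w.arg - z.arg) / normSq z := by
    rw [div_im, Real.sin_sub, ← norm_mul_cos_arg z, ← norm_mul_sin_arg z, ← norm_mul_cos_arg w,
      ← norm_mul_sin_arg w]
    ring
  rw [him]
  have hsin := Real.sin_pos_of_mem_Ioo hzw
  have hzn := normSq_pos.2 hz
  positivity

lemma div_mem_openSector_of_arg (hz : z ∈ UHP) (hzw : z.arg < w.arg) (hw : w.arg < Real.pi) :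
    w / z ∈ openSector z := by
  have hz₀ : z ≠ 0 := ne_zero_of_mem_slitP (UHP_subset_slitP hz)
  have hzarg : 0 < z.arg := (arg_nonneg_iff.2 (le_of_lt hz)).lt_of_ne' fun h =>
    (ne_of_gt hz) (arg_eq_zero_iff.1 h).2
  have hwi : 0 < w.im := im_pos_of_arg_mem_Ioo ⟨hzarg.trans hzw, hw⟩
  rw [mem_openSector_iff_of_mem_UHP hz, mul_div_cancel₀ _ hz₀]
  refine ⟨hwi, im_div_pos_of_arg_sub_arg_mem_Ioo hz₀ ?_ ⟨by linarith, by linarith⟩⟩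
  rintro rfl
  simp at hwi

lemma isSectorial_div (hd : DifferentiableOn ℂ η SlitP) (hm : MapsTo η SlitP SlitP)
    (hlim : Tendsto (fun x : ℝ => η x) (𝓝[<] 0) (𝓝 0))
    (harg : ∀ z, 0 < z.im → z.arg < (η z).arg ∧ (η z).arg < Real.pi)
    (hconj : ∀ z ∈ SlitP, η (conj z) = conj (η z)) : IsSectorial fun z => η z / z where
  differentiableOn := hd.div differentiableOn_id fun _ => ne_zero_of_mem_slitP
  mem_openSector z hz := by
    have hupper : ∀ z ∈ UHP, η z / z ∈ openSector z := fun z hz =>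
      div_mem_openSector_of_arg hz (harg z hz).1 (harg z hz).2
    rcases lt_trichotomy z.im 0 with him | him | him
    · have hmem := conj_mem_openSector_conj (hupper (conj z) (by simpa [UHP] using him))
      simpa [hconj z hz] using hmem
    · lift z to ℝ using him
      have hx : z < 0 := by simpa [SlitP] using hz
      have hη : (η z).im = 0 := conj_eq_iff_im.1 (by simpa using (hconj z hz).symm)
      have hre : (η z).re < 0 := by simpa [SlitP, hη] using hm hz
      rw [mem_openSector_ofReal_iff hx, div_ofReal_re, div_ofReal_im, hη, zero_div]
      exact ⟨div_pos_of_neg_of_neg hre hx, rfl⟩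
    · exact hupper z him
  tendsto_mul := by
    refine hlim.congr' ?_
    filter_upwards [self_mem_nhdsWithin] with x hx
    exact (mul_div_cancel₀ _ (ofReal_ne_zero.2 (ne_of_lt hx))).symm

lemma IsSectorial.mapsTo_closedSector (hh : IsSectorial h) (hz : z ∈ SlitP) :
    MapsTo (fun w => h (z * w)) (closedSector z \ {0}) (closedSector z \ {0}) := by
  intro w hw
  have hzw := mul_mem_slitP_of_mem_closedSector hz hw
  have hmem := hh.mem_openSector _ hzw
  exact ⟨openSector_mul_subset_closedSector hw.1 hmem,
    slitPlane_ne_zero (openSector_subset_slitPlane hzw hmem)⟩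

lemma mapsTo_subordinationMap_closedSector (hh₁ : IsSectorial h₁) (hh₂ : IsSectorial h₂)
    (hz : z ∈ SlitP) :
    MapsTo (subordinationMap h₁ h₂ z) (closedSector z \ {0}) (closedSector z \ {0}) :=
  (hh₂.mapsTo_closedSector hz).comp (hh₁.mapsTo_closedSector hz)

lemma IsSectorial.mul_mem_UHP (hh : IsSectorial h) (hz : z ≠ 0) (hzi : 0 ≤ z.im) (hw : w ∈ UHP) :
    z * h (z * w) ∈ UHP :=
  mul_mem_UHP_of_mem_openSector hz hzi (le_of_lt hw) (Or.inr hw)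
    (hh.mem_openSector _ (mul_mem_slitP_of_mem_UHP hz hzi hw))

lemma IsSectorial.mapsTo_UHP (hh : IsSectorial h) : MapsTo h UHP UHP := fun z hz =>
  openSector_subset_UHP hz (hh.mem_openSector z (UHP_subset_slitP hz))

lemma subordinationMap_mem_UHP (hh₁ : IsSectorial h₁) (hh₂ : IsSectorial h₂) (hz : z ≠ 0)
    (hzi : 0 ≤ z.im) (hw : w ∈ UHP) : subordinationMap h₁ h₂ z w ∈ UHP :=
  hh₂.mapsTo_UHP (hh₁.mul_mem_UHP hz hzi hw)

lemma differentiableOn_subordinationMap (hh₁ : DifferentiableOn ℂ h₁ SlitP)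
    (hh₂ : DifferentiableOn ℂ h₂ SlitP) (hu : DifferentiableOn ℂ u U)
    (hv : DifferentiableOn ℂ v U) (huv : MapsTo (fun t => u t * v t) U SlitP)
    (huh : MapsTo (fun t => u t * h₁ (u t * v t)) U SlitP) :
    DifferentiableOn ℂ (fun t => subordinationMap h₁ h₂ (u t) (v t)) U :=
  hh₂.comp (hu.mul (hh₁.comp (hu.mul hv) huv)) huh

lemma IsSectorial.differentiableOn_subordinationMap_of_mem_closedSector (hh₁ : IsSectorial h₁)
    (hh₂ : IsSectorial h₂) {g : ℂ → ℂ} (hg : DifferentiableOn ℂ g SlitP)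
    (hmem : ∀ z ∈ SlitP, g z ∈ closedSector z \ {0}) :
    DifferentiableOn ℂ (fun z => subordinationMap h₁ h₂ z (g z)) SlitP :=
  differentiableOn_subordinationMap hh₁.differentiableOn hh₂.differentiableOn differentiableOn_id
    hg (fun z hz => mul_mem_slitP_of_mem_closedSector hz (hmem z hz))
    (fun z hz => mul_mem_slitP_of_mem_closedSector hz (hh₁.mapsTo_closedSector hz (hmem z hz)))

lemma iterate_subordinationMap_one_mem_closedSector (hh₁ : IsSectorial h₁) (hh₂ : IsSectorial h₂)
    (hz : z ∈ SlitP) (n : ℕ) :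
    (subordinationMap h₁ h₂ z)^[n] 1 ∈ closedSector z \ {0} :=
  (mapsTo_subordinationMap_closedSector hh₁ hh₂ hz).iterate n
    ⟨one_mem_closedSector, one_ne_zero⟩

lemma differentiableOn_iterate_subordinationMap_one (hh₁ : IsSectorial h₁) (hh₂ : IsSectorial h₂)
    (n : ℕ) : DifferentiableOn ℂ (fun z => (subordinationMap h₁ h₂ z)^[n] 1) SlitP := by
  induction n with
  | zero => exact differentiableOn_const 1
  | succ n ih =>
    simp_rw [Function.iterate_succ_apply']
    exact hh₁.differentiableOn_subordinationMap_of_mem_closedSector hh₂ ih fun z hz =>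
      iterate_subordinationMap_one_mem_closedSector hh₁ hh₂ hz n

end Sectorial

/-! ### Dynamics on the negative axis -/

section NegativeAxis

lemma exists_isFixedPt_tendsto_iterate_of_monotone {α : Type*} [CompleteLinearOrder α]
    [TopologicalSpace α] [OrderTopology α] {T : α → α} (hmono : Monotone T)
    (hcont : Continuous T) (x : α) :
    ∃ L, Function.IsFixedPt T L ∧ Tendsto (fun n => T^[n] x) atTop (𝓝 L) := by
  suffices h : ∃ L, Tendsto (fun n => T^[n] x) atTop (𝓝 L) from
    h.imp fun L hL => ⟨isFixedPt_of_tendsto_iterate hL hcont.continuousAt, hL⟩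
  rcases le_total x (T x) with hx | hx
  · exact ⟨_, tendsto_atTop_iSup (hmono.monotone_iterate_of_le_map hx)⟩
  · exact ⟨_, tendsto_atTop_iInf (hmono.antitone_iterate_of_map_le hx)⟩

lemma exists_isFixedPt_tendsto_iterate_of_mem_Icc {T : ℝ → ℝ} {a b x : ℝ}
    (hmono : MonotoneOn T (Icc a b)) (hcont : ContinuousOn T (Icc a b)) (ha : a ≤ T a)
    (hb : T b ≤ b) (hx : x ∈ Icc a b) :
    ∃ L ∈ Icc a b, Function.IsFixedPt T L ∧ Tendsto (fun n => T^[n] x) atTop (𝓝 L) := by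
  have hab : a ≤ b := hx.1.trans hx.2
  have : Fact (a ≤ b) := ⟨hab⟩
  have hmaps : MapsTo T (Icc a b) (Icc a b) := fun t ht =>
    ⟨ha.trans (hmono (left_mem_Icc.2 hab) ht ht.1), (hmono ht (right_mem_Icc.2 hab) ht.2).trans hb⟩
  have hmono' : Monotone (hmaps.restrict T _ _) := monotoneOn_iff_monotone.1 hmono
  obtain ⟨L, hfix, hL⟩ :=
    exists_isFixedPt_tendsto_iterate_of_monotone hmono' (hcont.mapsToRestrict hmaps) ⟨x, hx⟩
  refine ⟨L, L.2, congrArg Subtype.val hfix, ?_⟩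
  simpa [Function.comp_def, hmaps.coe_iterate_restrict] using
    (continuous_subtype_val.tendsto L).comp hL

/-- The properties of the restriction `k` of a sectorial function to the negative axis that force
the iterates of `subordinationMap` to converge there. -/
structure IsNegTrace (k : ℝ → ℝ) : Prop where
  pos : ∀ x < 0, 0 < k x
  continuousOn : ContinuousOn k (Iio 0)
  monotoneOn : MonotoneOn k (Iio 0)
  monotoneOn_mul : MonotoneOn (fun x => x * k x) (Iio 0)
  tendsto_mul : Tendsto (fun x => x * k x) (𝓝[<] 0) (𝓝 0)

variable {k k₁ k₂ : ℝ → ℝ} {w x y : ℝ}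

namespace IsNegTrace

lemma mul_apply_neg (hk : IsNegTrace k) (hx : x < 0) : x * k x < 0 :=
  mul_neg_of_neg_of_pos hx (hk.pos x hx)

lemma mul_comp_mul_neg (hk : IsNegTrace k) (hy : y < 0) (hw : 0 < w) : y * k (y * w) < 0 :=
  mul_neg_of_neg_of_pos hy (hk.pos _ (mul_neg_of_neg_of_pos hy hw))

lemma monotoneOn_mul_comp_mul (hk : IsNegTrace k) (hy : y < 0) :
    MonotoneOn (fun w => y * k (y * w)) (Ioi 0) := fun _ hv _ hw hvw =>
  mul_le_mul_of_nonpos_left (hk.monotoneOn (mul_neg_of_neg_of_pos hy hw)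
    (mul_neg_of_neg_of_pos hy hv) (mul_le_mul_of_nonpos_left hvw hy.le)) hy.le

lemma monotoneOn_subordinationMap (hk₁ : IsNegTrace k₁) (hk₂ : IsNegTrace k₂) (hy : y < 0) :
    MonotoneOn (subordinationMap k₁ k₂ y) (Ioi 0) :=
  hk₂.monotoneOn.comp (hk₁.monotoneOn_mul_comp_mul hy) fun _ hw => hk₁.mul_comp_mul_neg hy hw

lemma continuousOn_subordinationMap (hk₁ : IsNegTrace k₁) (hk₂ : IsNegTrace k₂) (hy : y < 0) :
    ContinuousOn (subordinationMap k₁ k₂ y) (Ioi 0) := by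
  have hinner : ContinuousOn (fun w => k₁ (y * w)) (Ioi 0) :=
    hk₁.continuousOn.comp (by fun_prop) fun _ hw => mul_neg_of_neg_of_pos hy hw
  exact hk₂.continuousOn.comp (continuousOn_const.mul hinner) fun _ hw =>
    hk₁.mul_comp_mul_neg hy hw

lemma le_subordinationMap_iff (hk₁ : IsNegTrace k₁) (hy : y < 0) (hw : 0 < w) :
    w ≤ subordinationMap k₁ k₂ y w ↔
      y * k₁ (y * w) * k₂ (y * k₁ (y * w)) ≤ y * w * k₁ (y * w) := by
  rw [mul_right_comm y w, mul_le_mul_left_of_neg (hk₁.mul_comp_mul_neg hy hw), subordinationMap]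

lemma subordinationMap_le_iff (hk₁ : IsNegTrace k₁) (hy : y < 0) (hw : 0 < w) :
    subordinationMap k₁ k₂ y w ≤ w ↔
      y * w * k₁ (y * w) ≤ y * k₁ (y * w) * k₂ (y * k₁ (y * w)) := by
  rw [mul_right_comm y w, mul_le_mul_left_of_neg (hk₁.mul_comp_mul_neg hy hw), subordinationMap]

lemma eventually_le_subordinationMap (hk₁ : IsNegTrace k₁) (hk₂ : IsNegTrace k₂) (hy : y < 0) :
    ∀ᶠ w in 𝓝[>] 0, w ≤ subordinationMap k₁ k₂ y w := by
  have hu : y * k₁ (y * 1) < 0 := hk₁.mul_comp_mul_neg hy one_pos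
  have hmul : Tendsto (fun w => y * w) (𝓝[>] 0) (𝓝[<] 0) := by
    refine tendsto_nhdsWithin_iff.2 ⟨?_, ?_⟩
    · simpa only [mul_zero] using
        ((continuous_const_mul y).tendsto 0).mono_left nhdsWithin_le_nhds
    · filter_upwards [self_mem_nhdsWithin] with w hw using mul_neg_of_neg_of_pos hy hw
  filter_upwards [self_mem_nhdsWithin, Ioc_mem_nhdsGT one_pos,
    (hk₁.tendsto_mul.comp hmul).eventually_const_lt (hk₂.mul_apply_neg hu)] with w hw hw₁ hlt
  rw [hk₁.le_subordinationMap_iff hy hw]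
  exact (hk₂.monotoneOn_mul (hk₁.mul_comp_mul_neg hy hw) hu
    (hk₁.monotoneOn_mul_comp_mul hy hw (mem_Ioi.2 one_pos) hw₁.2)).trans hlt.le

lemma exists_subordinationMap_le (hk₁ : IsNegTrace k₁) (hk₂ : IsNegTrace k₂) (hy : y < 0)
    (hw : 0 < w) : ∃ b ≥ w, subordinationMap k₁ k₂ y b ≤ b := by
  have hyw : y * w < 0 := mul_neg_of_neg_of_pos hy hw
  obtain ⟨d, hd, hlt⟩ : ∃ d < 0, y * w * k₁ (y * w) < d * k₂ d :=
    (eventually_mem_nhdsWithin.and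
      (hk₂.tendsto_mul.eventually_const_lt (hk₁.mul_apply_neg hyw))).exists
  refine ⟨max w (k₂ d), le_max_left _ _, ?_⟩
  set b := max w (k₂ d)
  have hb : 0 < b := lt_max_of_lt_left hw
  have hu := hk₁.mul_comp_mul_neg hy hb
  rcases le_total (y * k₁ (y * b)) d with hle | hle
  · exact (hk₂.monotoneOn hu hd hle).trans (le_max_right _ _)
  · rw [hk₁.subordinationMap_le_iff hy hb]
    calc y * b * k₁ (y * b) ≤ y * w * k₁ (y * w) :=
          hk₁.monotoneOn_mul (mul_neg_of_neg_of_pos hy hb) hyw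
            (mul_le_mul_of_nonpos_left (le_max_left _ _) hy.le)
      _ ≤ d * k₂ d := hlt.le
      _ ≤ y * k₁ (y * b) * k₂ (y * k₁ (y * b)) := hk₂.monotoneOn_mul hd hu hle

theorem exists_tendsto_iterate_subordinationMap (hk₁ : IsNegTrace k₁) (hk₂ : IsNegTrace k₂)
    (hy : y < 0) (hw : 0 < w) :
    ∃ L > 0, subordinationMap k₁ k₂ y L = L ∧
      Tendsto (fun n => (subordinationMap k₁ k₂ y)^[n] w) atTop (𝓝 L) := by
  obtain ⟨a, ha, haw⟩ := ((hk₁.eventually_le_subordinationMap hk₂ hy).and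
    (Ioc_mem_nhdsGT hw)).exists
  obtain ⟨b, hwb, hb⟩ := hk₁.exists_subordinationMap_le hk₂ hy hw
  have hsub : Icc a b ⊆ Ioi 0 := fun t ht => haw.1.trans_le ht.1
  obtain ⟨L, hL, hfix, hlim⟩ := exists_isFixedPt_tendsto_iterate_of_mem_Icc
    ((hk₁.monotoneOn_subordinationMap hk₂ hy).mono hsub)
    ((hk₁.continuousOn_subordinationMap hk₂ hy).mono hsub) ha hb ⟨haw.2, hwb⟩
  exact ⟨L, hsub hL, hfix, hlim⟩

end IsNegTrace

end NegativeAxis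

/-! ### Sectorial functions on the negative axis -/

section Trace

variable {φ h h₁ h₂ : ℂ → ℂ} {w x y : ℝ}

lemma re_deriv_nonneg_of_im_nonneg (hd : DifferentiableAt ℂ φ x)
    (him : ∀ z ∈ UHP, 0 ≤ (φ z).im) (hx : (φ x).im = 0) : 0 ≤ (deriv φ x).re := by
  have hline : HasDerivAt (fun t : ℝ => (x + t * I : ℂ)) I 0 := by
    simpa using ((ofRealCLM.hasDerivAt (x := 0)).mul_const I).const_add (x : ℂ)
  have hφ : HasDerivAt φ (deriv φ x) (x + (0 : ℝ) * I) := by simpa using hd.hasDerivAt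
  have hvert : HasDerivAt (fun t : ℝ => (φ (x + t * I)).im) (deriv φ x).re 0 := by
    simpa [Function.comp_def] using imCLM.hasFDerivAt.comp_hasDerivAt _ (hφ.scomp 0 hline)
  refine ge_of_tendsto hvert.tendsto_slope_zero_right ?_
  filter_upwards [self_mem_nhdsWithin] with t (ht : 0 < t)
  have hnonneg := him (x + t * I) (by simpa [UHP] using ht)
  simpa [hx] using mul_nonneg (inv_nonneg.2 ht.le) hnonneg

lemma monotoneOn_re_of_im_nonneg (hd : DifferentiableOn ℂ φ SlitP)
    (him : ∀ z ∈ UHP, 0 ≤ (φ z).im) (hre : ∀ x : ℝ, x < 0 → (φ x).im = 0) :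
    MonotoneOn (fun x : ℝ => (φ x).re) (Iio 0) := by
  have hdiff : ∀ x : ℝ, x < 0 → DifferentiableAt ℂ φ x := fun x hx =>
    hd.differentiableAt (isOpen_slitP.mem_nhds (ofReal_mem_slitP hx))
  have hderiv : ∀ x : ℝ, x < 0 → HasDerivAt (fun t : ℝ => (φ t).re) (deriv φ x).re x :=
    fun x hx => (hdiff x hx).hasDerivAt.real_of_complex
  refine monotoneOn_of_hasDerivWithinAt_nonneg (f' := fun x => (deriv φ x).re) (convex_Iio 0)
    (fun x hx => (hderiv x hx).continuousAt.continuousWithinAt) ?_ ?_ <;> rw [interior_Iio]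
  · exact fun x hx => (hderiv x hx).hasDerivWithinAt
  · exact fun x hx => re_deriv_nonneg_of_im_nonneg (hdiff x hx) him (hre x hx)

/-- The restriction to the real axis of a function that is real on the negative axis. -/
def negTrace (h : ℂ → ℂ) (x : ℝ) : ℝ := (h x).re

namespace IsSectorial

lemma re_pos_and_im_eq_zero (hh : IsSectorial h) (hx : x < 0) : 0 < (h x).re ∧ (h x).im = 0 :=
  (mem_openSector_ofReal_iff hx).1 (hh.mem_openSector x (ofReal_mem_slitP hx))

lemma ofReal_negTrace (hh : IsSectorial h) (hx : x < 0) : (negTrace h x : ℂ) = h x :=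
  Complex.ext rfl (hh.re_pos_and_im_eq_zero hx).2.symm

lemma isNegTrace_negTrace (hh : IsSectorial h) : IsNegTrace (negTrace h) where
  pos x hx := (hh.re_pos_and_im_eq_zero hx).1
  continuousOn := continuous_re.comp_continuousOn <| hh.differentiableOn.continuousOn.comp
    continuous_ofReal.continuousOn fun _ hx => ofReal_mem_slitP hx
  monotoneOn := monotoneOn_re_of_im_nonneg hh.differentiableOn
    (fun _ hz => le_of_lt (hh.mapsTo_UHP hz)) fun _ hx => (hh.re_pos_and_im_eq_zero hx).2
  monotoneOn_mul := by
    have hmono := monotoneOn_re_of_im_nonneg (φ := fun z => z * h z)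
      (differentiableOn_id.mul hh.differentiableOn)
      (fun z hz => le_of_lt ((mem_openSector_iff_of_mem_UHP hz).1
        (hh.mem_openSector z (UHP_subset_slitP hz))).1)
      fun x hx => by rw [im_ofReal_mul, (hh.re_pos_and_im_eq_zero hx).2, mul_zero]
    simpa only [re_ofReal_mul, negTrace] using hmono
  tendsto_mul := by
    simpa [Function.comp_def, negTrace] using
      (continuous_re.tendsto 0).comp hh.tendsto_mul

lemma ofReal_subordinationMap_negTrace (hh₁ : IsSectorial h₁) (hh₂ : IsSectorial h₂) (hy : y < 0)
    (hw : 0 < w) :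
    ((subordinationMap (negTrace h₁) (negTrace h₂) y w : ℝ) : ℂ) = subordinationMap h₁ h₂ y w := by
  have hyw : y * w < 0 := mul_neg_of_neg_of_pos hy hw
  rw [subordinationMap, hh₂.ofReal_negTrace (hh₁.isNegTrace_negTrace.mul_comp_mul_neg hy hw),
    ofReal_mul, hh₁.ofReal_negTrace hyw, ofReal_mul, subordinationMap]

lemma ofReal_iterate_subordinationMap_negTrace (hh₁ : IsSectorial h₁) (hh₂ : IsSectorial h₂)
    (hy : y < 0) (hw : 0 < w) (n : ℕ) :
    (((subordinationMap (negTrace h₁) (negTrace h₂) y)^[n] w : ℝ) : ℂ) =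
      (subordinationMap h₁ h₂ y)^[n] w := by
  have hpos : MapsTo (subordinationMap (negTrace h₁) (negTrace h₂) y) (Ioi 0) (Ioi 0) :=
    fun _ hw => hh₂.isNegTrace_negTrace.pos _ (hh₁.isNegTrace_negTrace.mul_comp_mul_neg hy hw)
  induction n with
  | zero => rfl
  | succ n ih =>
    rw [Function.iterate_succ_apply', Function.iterate_succ_apply', ← ih,
      hh₁.ofReal_subordinationMap_negTrace hh₂ hy (hpos.iterate n hw)]

theorem exists_tendsto_iterate_subordinationMap_ofReal (hh₁ : IsSectorial h₁)
    (hh₂ : IsSectorial h₂) (hy : y < 0) :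
    ∃ L : ℝ, 0 < L ∧ subordinationMap h₁ h₂ y L = L ∧
      Tendsto (fun n => (subordinationMap h₁ h₂ y)^[n] 1) atTop (𝓝 (L : ℂ)) := by
  obtain ⟨L, hL, hfix, hlim⟩ := hh₁.isNegTrace_negTrace.exists_tendsto_iterate_subordinationMap
    hh₂.isNegTrace_negTrace hy one_pos
  refine ⟨L, hL, ?_, ?_⟩
  · rw [← hh₁.ofReal_subordinationMap_negTrace hh₂ hy hL, hfix]
  · simpa [Function.comp_def, hh₁.ofReal_iterate_subordinationMap_negTrace hh₂ hy one_pos] using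
      (continuous_ofReal.tendsto L).comp hlim

end IsSectorial

end Trace

/-! ### Normal families -/

section Cayley

variable {a w ζ : ℂ}

/-- The Cayley transform of `ℂ⁺` onto the unit disc that sends `a` to `0`. -/
noncomputable def cayley (a w : ℂ) : ℂ := (w - a) / (w - conj a)

/-- The inverse of `cayley a`. -/
noncomputable def cayleyInv (a ζ : ℂ) : ℂ := (a - conj a * ζ) / (1 - ζ)

lemma sub_conj_ne_zero (ha : a ∈ UHP) (hw : w ∈ UHP) : w - conj a ≠ 0 := by
  intro h
  have him : w.im + a.im = 0 := by simpa using congrArg im h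
  exact (add_pos hw ha).ne' him

lemma one_sub_ne_zero_of_mem_ball (hζ : ζ ∈ Metric.ball (0 : ℂ) 1) : 1 - ζ ≠ 0 := by
  rw [sub_ne_zero]
  rintro rfl
  simp at hζ

lemma differentiableOn_cayley (ha : a ∈ UHP) : DifferentiableOn ℂ (cayley a) UHP :=
  DifferentiableOn.div (by fun_prop) (by fun_prop) fun _ => sub_conj_ne_zero ha

lemma differentiableOn_cayleyInv : DifferentiableOn ℂ (cayleyInv a) (Metric.ball 0 1) :=
  DifferentiableOn.div (by fun_prop) (by fun_prop) fun _ => one_sub_ne_zero_of_mem_ball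

lemma cayley_self : cayley a a = 0 := by simp [cayley]

lemma cayleyInv_zero : cayleyInv a 0 = a := by simp [cayleyInv]

lemma mapsTo_cayley (ha : a ∈ UHP) : MapsTo (cayley a) UHP (Metric.ball 0 1) := by
  intro w hw
  have hsq : normSq (w - conj a) - normSq (w - a) = 4 * (w.im * a.im) := by
    simp only [normSq_apply, sub_re, sub_im, conj_re, conj_im]
    ring
  have hlt : normSq (w - a) < normSq (w - conj a) := by
    rw [← sub_pos, hsq]
    exact mul_pos four_pos (mul_pos hw ha)
  rw [normSq_eq_norm_sq, normSq_eq_norm_sq, sq_lt_sq₀ (norm_nonneg _) (norm_nonneg _)] at hlt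
  rw [mem_ball_zero_iff, cayley, norm_div]
  exact (div_lt_one (norm_pos_iff.2 (sub_conj_ne_zero ha hw))).2 hlt

lemma cayleyInv_im : (cayleyInv a ζ).im = a.im * (1 - normSq ζ) / normSq (1 - ζ) := by
  rw [cayleyInv, div_im]
  simp only [sub_re, sub_im, mul_re, mul_im, conj_re, conj_im, one_re, one_im, normSq_apply ζ]
  ring

lemma mapsTo_cayleyInv (ha : a ∈ UHP) : MapsTo (cayleyInv a) (Metric.ball 0 1) UHP := by
  intro ζ hζ
  have hnum : 0 < 1 - normSq ζ := by
    rw [mem_ball_zero_iff, ← sq_lt_one_iff₀ (norm_nonneg ζ), ← normSq_eq_norm_sq] at hζ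
    exact sub_pos.2 hζ
  rw [UHP, Set.mem_ofPred_eq, cayleyInv_im]
  exact div_pos (mul_pos ha hnum) (normSq_pos.2 (one_sub_ne_zero_of_mem_ball hζ))

lemma leftInvOn_cayleyInv_cayley (ha : a ∈ UHP) : LeftInvOn (cayleyInv a) (cayley a) UHP := by
  intro w hw
  have hwa := sub_conj_ne_zero ha hw
  have haa := sub_conj_ne_zero ha ha
  have hden : 1 - cayley a w = (a - conj a) / (w - conj a) := by
    rw [cayley]
    field_simp
    ring
  have hnum : a - conj a * cayley a w = w * (a - conj a) / (w - conj a) := by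
    rw [cayley]
    field_simp
    ring
  rw [cayleyInv, hden, hnum]
  field_simp

end Cayley

section NormalFamily

lemma tendstoLocallyUniformlyOn_of_equicontinuousOn {X α ι : Type*} [TopologicalSpace X]
    [LocallyCompactSpace X] [UniformSpace α] {F : ι → X → α} {g : X → α} {l : Filter ι}
    {U : Set X} (hU : IsOpen U) (hF : EquicontinuousOn F U)
    (hlim : ∀ x ∈ U, Tendsto (fun i => F i x) l (𝓝 (g x))) :
    TendstoLocallyUniformlyOn F g l U := by
  let compacts : Set (Set X) := {K | K ⊆ U ∧ IsCompact K}
  have hsub : ⋃₀ compacts ⊆ U := sUnion_subset fun K hK => hK.1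
  have hpi : Tendsto ((⋃₀ compacts).domRestrict ∘ F) l (𝓝 ((⋃₀ compacts).domRestrict g)) :=
    tendsto_pi_nhds.2 fun x => hlim x (hsub x.2)
  rw [← EquicontinuousOn.tendsto_uniformOnFun_iff_pi' (fun K hK => hK.2)
    (fun K hK => hF.mono hK.1), UniformOnFun.tendsto_iff_tendstoUniformlyOn] at hpi
  exact (tendstoLocallyUniformlyOn_iff_forall_isCompact hU).2 fun K hKU hK => hpi K ⟨hKU, hK⟩

variable {U V W : Set ℂ} {C : ℝ}

lemma equicontinuousOn_of_norm_le {ι : Type*} {F : ι → ℂ → ℂ} (hU : IsOpen U)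
    (hF : ∀ i, DifferentiableOn ℂ (F i) U) (hC : ∀ i, ∀ z ∈ U, ‖F i z‖ ≤ C) :
    EquicontinuousOn F U := by
  intro z hz
  obtain ⟨r, hr, hrU⟩ := Metric.isOpen_iff.1 hU z hz
  refine (Metric.equicontinuousAt_of_continuity_modulus (fun v => 2 * C / r * dist v z) ?_ F
    ?_).equicontinuousWithinAt U
  · have hcont : Continuous fun v => 2 * C / r * dist v z := by fun_prop
    simpa using hcont.tendsto z
  · filter_upwards [Metric.ball_mem_nhds z hr] with v hv i
    rw [dist_comm]
    refine dist_le_div_mul_dist_of_mapsTo_ball ((hF i).mono hrU) (fun u hu => ?_) hv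
    rw [Metric.mem_closedBall, dist_eq_norm]
    linarith [norm_sub_le (F i u) (F i z), hC i u (hrU hu), hC i z hz]

theorem exists_differentiableOn_tendsto_of_norm_le {ι : Type*} {F : ι → ℂ → ℂ}
    (l : Ultrafilter ι) (hU : IsOpen U) (hF : ∀ i, DifferentiableOn ℂ (F i) U)
    (hC : ∀ i, ∀ z ∈ U, ‖F i z‖ ≤ C) :
    ∃ g : ℂ → ℂ, DifferentiableOn ℂ g U ∧ ∀ z ∈ U, Tendsto (fun i => F i z) l (𝓝 (g z)) := by
  have hpt : ∀ z, ∃ p, z ∈ U → Tendsto (fun i => F i z) l (𝓝 p) := by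
    intro z
    by_cases hz : z ∈ U
    · have hmem : Metric.closedBall (0 : ℂ) C ∈ l.map fun i => F i z :=
        Ultrafilter.mem_map.2 (univ_mem' fun i => mem_closedBall_zero_iff.2 (hC i z hz))
      obtain ⟨p, -, hp⟩ := (isCompact_closedBall (0 : ℂ) C).ultrafilter_le_nhds' _ hmem
      exact ⟨p, fun _ => hp⟩
    · exact ⟨0, fun h => absurd h hz⟩
  choose g hg using hpt
  have hloc := tendstoLocallyUniformlyOn_of_equicontinuousOn hU
    (equicontinuousOn_of_norm_le hU hF hC) hg
  exact ⟨g, hloc.differentiableOn (Eventually.of_forall hF) hU, hg⟩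

/-- Tautness of `V`: families of holomorphic maps into `V` are normal, a limit that meets `V`
staying inside `V`. Ultrafilters take the place of subsequences, so no extraction is needed. -/
def IsTaut (V : Set ℂ) : Prop :=
  ∀ ⦃U : Set ℂ⦄, IsOpen U → IsPreconnected U → ∀ (F : ℕ → ℂ → ℂ) (l : Ultrafilter ℕ),
    (∀ n, DifferentiableOn ℂ (F n) U) → (∀ n, MapsTo (F n) U V) →
    ∀ z₀ ∈ U, ∀ w₀ ∈ V, Tendsto (fun n => F n z₀) l (𝓝 w₀) →
      ∃ g : ℂ → ℂ, DifferentiableOn ℂ g U ∧ MapsTo g U V ∧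
        ∀ z ∈ U, Tendsto (fun n => F n z) l (𝓝 (g z))

lemma isTaut_ball : IsTaut (Metric.ball 0 1) := by
  intro U hU hUc F l hF hFm z₀ hz₀ w₀ hw₀ hlim₀
  have hF₁ : ∀ n, ∀ z ∈ U, ‖F n z‖ ≤ 1 := fun n z hz => (mem_ball_zero_iff.1 (hFm n hz)).le
  obtain ⟨g, hg, hlim⟩ := exists_differentiableOn_tendsto_of_norm_le l hU hF hF₁
  have hg₁ : ∀ z ∈ U, ‖g z‖ ≤ 1 := fun z hz =>
    le_of_tendsto (hlim z hz).norm (Eventually.of_forall fun n => hF₁ n z hz)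
  refine ⟨g, hg, fun c hc => mem_ball_zero_iff.2 ((hg₁ c hc).lt_of_ne fun hgc => ?_), hlim⟩
  have hmax : IsMaxOn (norm ∘ g) U c := fun z hz => (hg₁ z hz).trans_eq hgc.symm
  have hgz₀ : ‖g z₀‖ = ‖g c‖ := norm_eqOn_of_isPreconnected_of_isMaxOn hUc hU hg hc hmax hz₀
  rw [tendsto_nhds_unique (hlim z₀ hz₀) hlim₀, hgc] at hgz₀
  exact (mem_ball_zero_iff.1 hw₀).ne hgz₀

lemma IsTaut.of_leftInvOn {P Q : ℂ → ℂ} (hW : IsTaut W) (hP : DifferentiableOn ℂ P V)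
    (hPm : MapsTo P V W) (hQ : DifferentiableOn ℂ Q W) (hQm : MapsTo Q W V)
    (hQP : LeftInvOn Q P V) : IsTaut V := by
  intro U hU hUc F l hF hFm z₀ hz₀ w₀ hw₀ hlim₀
  have hPlim : Tendsto (fun n => P (F n z₀)) l (𝓝 (P w₀)) :=
    (hP.continuousOn w₀ hw₀).tendsto.comp
      (tendsto_nhdsWithin_iff.2 ⟨hlim₀, Eventually.of_forall fun n => hFm n hz₀⟩)
  obtain ⟨g, hg, hgm, hlim⟩ := hW hU hUc (fun n z => P (F n z)) l
    (fun n => hP.comp (hF n) (hFm n)) (fun n => hPm.comp (hFm n)) z₀ hz₀ _ (hPm hw₀) hPlim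
  refine ⟨Q ∘ g, hQ.comp hg hgm, hQm.comp hgm, fun z hz => ?_⟩
  have hQlim := (hQ.continuousOn (g z) (hgm hz)).tendsto.comp
    (tendsto_nhdsWithin_iff.2 ⟨hlim z hz, Eventually.of_forall fun n => hPm (hFm n hz)⟩)
  exact hQlim.congr fun n => hQP (hFm n hz)

lemma isTaut_UHP : IsTaut UHP :=
  have hI : I ∈ UHP := by simp [UHP]
  isTaut_ball.of_leftInvOn (differentiableOn_cayley hI) (mapsTo_cayley hI)
    differentiableOn_cayleyInv (mapsTo_cayleyInv hI) (leftInvOn_cayleyInv_cayley hI)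

lemma re_sqrt_pos {w : ℂ} (hw : w ∈ slitPlane) : 0 < (Complex.sqrt w).re := by
  rw [Complex.sqrt, cpow_inv_two_re, Real.sqrt_pos]
  suffices h : 0 < ‖w‖ + w.re by positivity
  rcases hw with hre | him
  · positivity
  · linarith [neg_abs_le w.re, abs_re_lt_norm.2 him]

lemma sq_sqrt (w : ℂ) : Complex.sqrt w ^ 2 = w := by simp [Complex.sqrt]

lemma neg_sq_mem_slitPlane {ζ : ℂ} (hζ : ζ ∈ UHP) : -ζ ^ 2 ∈ slitPlane := by
  have hre : (-ζ ^ 2).re = ζ.im ^ 2 - ζ.re ^ 2 := by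
    rw [neg_re, sq, mul_re]
    ring
  have him : (-ζ ^ 2).im = -(2 * ζ.re * ζ.im) := by
    rw [neg_im, sq, mul_im]
    ring
  have hζi : ζ.im ≠ 0 := ne_of_gt hζ
  rw [mem_slitPlane_iff, hre, him]
  by_cases hζr : ζ.re = 0
  · left
    rw [hζr, zero_pow two_ne_zero, sub_zero]
    positivity
  · exact Or.inr (neg_ne_zero.2 (mul_ne_zero (mul_ne_zero two_ne_zero hζr) hζi))

lemma isTaut_slitPlane : IsTaut slitPlane := by
  refine isTaut_UHP.of_leftInvOn (P := fun w => I * Complex.sqrt w) (Q := fun ζ => -ζ ^ 2) ?_ ?_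
    (by fun_prop) (fun _ => neg_sq_mem_slitPlane) ?_
  · exact differentiableOn_sqrt.const_mul I
  · intro w hw
    simpa [UHP] using re_sqrt_pos hw
  · intro w _
    simp [mul_pow, sq_sqrt]

end NormalFamily

/-! ### Fixed points -/

section FixedPoint

variable {Φ g h₁ h₂ : ℂ → ℂ} {a b w z : ℂ}

lemma eqOn_id_ball_of_mapsTo_of_fixed {R : ℝ} (hd : DifferentiableOn ℂ Φ (Metric.ball 0 R))
    (hm : MapsTo Φ (Metric.ball 0 R) (Metric.ball 0 R)) (h₀ : Φ 0 = 0)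
    (hb : b ∈ Metric.ball 0 R) (hb₀ : b ≠ 0) (hΦb : Φ b = b) : EqOn Φ id (Metric.ball 0 R) := by
  have hR : R ≠ 0 := (Metric.pos_of_mem_ball hb).ne'
  have hslope : dslope Φ 0 b = 1 := by
    rw [dslope_of_ne _ hb₀, slope_def_field, hΦb, h₀, sub_zero, div_self hb₀]
  have hmc : MapsTo Φ (Metric.ball 0 R) (Metric.closedBall (Φ 0) R) := by
    rw [h₀]
    exact hm.mono_right Metric.ball_subset_closedBall
  have haff := affine_of_mapsTo_ball_of_norm_dslope_eq_div hd hmc hb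
    (by rw [hslope, norm_one, div_self hR])
  intro w hw
  simpa [h₀, hslope] using haff hw

theorem eqOn_id_UHP_of_mapsTo_of_fixed (hd : DifferentiableOn ℂ g UHP) (hm : MapsTo g UHP UHP)
    (ha : a ∈ UHP) (hb : b ∈ UHP) (hab : a ≠ b) (hga : g a = a) (hgb : g b = b) :
    EqOn g id UHP := by
  have hinv := leftInvOn_cayleyInv_cayley ha
  have hC := mapsTo_cayley ha
  have hCinv := mapsTo_cayleyInv ha
  have hid := eqOn_id_ball_of_mapsTo_of_fixed (Φ := cayley a ∘ g ∘ cayleyInv a)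
    ((differentiableOn_cayley ha).comp (hd.comp differentiableOn_cayleyInv hCinv)
      (hm.comp hCinv))
    (hC.comp (hm.comp hCinv))
    (by simp [cayleyInv_zero, hga, cayley_self]) (hC hb)
    (div_ne_zero (sub_ne_zero.2 hab.symm) (sub_conj_ne_zero ha hb))
    (by simp [hinv hb, hgb])
  intro w hw
  have hgw : cayley a (g w) = cayley a w := by simpa [hinv hw] using hid (hC hw)
  rw [← hinv (hm hw), hgw, hinv hw, id]

lemma eqOn_slitP_of_forall_neg (hΦ : DifferentiableOn ℂ Φ SlitP) (hg : DifferentiableOn ℂ g SlitP)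
    (heq : ∀ x : ℝ, x < 0 → Φ x = g x) : EqOn Φ g SlitP := by
  have hreal : Tendsto ofReal (𝓝[≠] (-1)) (𝓝[≠] ((-1 : ℝ) : ℂ)) :=
    continuous_ofReal.continuousWithinAt.tendsto_nhdsWithin fun _ => ofReal_injective.ne
  have hnear : ∀ᶠ x : ℝ in 𝓝[≠] (-1), Φ x = g x := by
    filter_upwards [mem_nhdsWithin_of_mem_nhds (Iio_mem_nhds neg_one_lt_zero)] using heq
  exact (hΦ.analyticOnNhd isOpen_slitP).eqOn_of_preconnected_of_frequently_eq
    (hg.analyticOnNhd isOpen_slitP) isPreconnected_slitP (ofReal_mem_slitP neg_one_lt_zero)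
    (hreal.frequently hnear.frequently)

theorem exists_differentiableOn_fixedPoint_slitP (hh₁ : IsSectorial h₁) (hh₂ : IsSectorial h₂) :
    ∃ g : ℂ → ℂ, DifferentiableOn ℂ g SlitP ∧ ∀ z ∈ SlitP,
      g z ∈ closedSector z \ {0} ∧ subordinationMap h₁ h₂ z (g z) = g z := by
  obtain ⟨L, hL, -, hlim⟩ := hh₁.exists_tendsto_iterate_subordinationMap_ofReal hh₂
    (y := -1) neg_one_lt_zero
  obtain ⟨g, hg, hgm, hglim⟩ := isTaut_slitPlane isOpen_slitP isPreconnected_slitP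
    (fun n z => (subordinationMap h₁ h₂ z)^[n] 1) (hyperfilter ℕ)
    (differentiableOn_iterate_subordinationMap_one hh₁ hh₂)
    (fun n z hz => closedSector_diff_zero_subset_slitPlane hz
      (iterate_subordinationMap_one_mem_closedSector hh₁ hh₂ hz n))
    _ (ofReal_mem_slitP neg_one_lt_zero) L (by simpa using hL)
    (hlim.mono_left Nat.hyperfilter_le_atTop)
  have hmem : ∀ z ∈ SlitP, g z ∈ closedSector z \ {0} := fun z hz =>
    ⟨(isClosed_closedSector hz).mem_of_tendsto (hglim z hz) (Eventually.of_forall fun n =>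
      (iterate_subordinationMap_one_mem_closedSector hh₁ hh₂ hz n).1), slitPlane_ne_zero (hgm hz)⟩
  have hreal : ∀ y : ℝ, y < 0 → subordinationMap h₁ h₂ y (g y) = g y := by
    intro y hy
    obtain ⟨M, -, hfix, hlimM⟩ := hh₁.exists_tendsto_iterate_subordinationMap_ofReal hh₂ hy
    rw [tendsto_nhds_unique (hglim y (ofReal_mem_slitP hy))
      (hlimM.mono_left Nat.hyperfilter_le_atTop), hfix]
  exact ⟨g, hg, fun z hz => ⟨hmem z hz, eqOn_slitP_of_forall_neg
    (hh₁.differentiableOn_subordinationMap_of_mem_closedSector hh₂ hg hmem) hg hreal hz⟩⟩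

theorem exists_differentiableOn_fixedPoint_UHP (hh₁ : IsSectorial h₁) (hh₂ : IsSectorial h₂) :
    ∃ h : ℂ → ℂ, DifferentiableOn ℂ h UHP ∧ MapsTo h UHP UHP ∧
      ∀ z ∈ UHP, subordinationMap h₁ h₂ z (h z) = h z := by
  obtain ⟨g, hg, hgfix⟩ := exists_differentiableOn_fixedPoint_slitP hh₁ hh₂
  refine ⟨g, hg.mono UHP_subset_slitP, fun z hz => ?_, fun z hz =>
    (hgfix z (UHP_subset_slitP hz)).2⟩
  have hzs := UHP_subset_slitP hz
  obtain ⟨hmem, hfix⟩ := hgfix z hzs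
  rw [← hfix]
  exact hh₂.mapsTo_UHP (mul_mem_UHP_of_mem_openSector (ne_zero_of_mem_slitP hzs) (le_of_lt hz)
    (im_nonneg_of_mem_closedSector hz hmem.1) (Or.inl hz)
    (hh₁.mem_openSector _ (mul_mem_slitP_of_mem_closedSector hzs hmem)))

lemma subordinationMap_neg_conj_ne (hh₁ : IsSectorial h₁) (hh₂ : IsSectorial h₂) (hz : z ∈ UHP) :
    subordinationMap h₁ h₂ z (-conj z) ≠ -conj z := by
  intro hfix
  have hz₀ : z ≠ 0 := ne_zero_of_mem_slitP (UHP_subset_slitP hz)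
  have hw : -conj z ∈ UHP := by simpa [UHP] using hz
  have hx : -normSq z < 0 := neg_neg_of_pos (normSq_pos.2 hz₀)
  have hzw : z * -conj z = (-normSq z : ℝ) := by rw [mul_neg, mul_conj, ofReal_neg]
  have hmem := hh₁.mul_mem_UHP hz₀ (le_of_lt hz) hw
  have hpos := ((mem_openSector_iff_of_mem_UHP hmem).1
    (hh₂.mem_openSector _ (UHP_subset_slitP hmem))).1
  rw [subordinationMap] at hfix
  rw [hfix, mul_right_comm, hzw, im_ofReal_mul, (hh₁.re_pos_and_im_eq_zero hx).2, mul_zero] at hpos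
  exact hpos.false

theorem fixedPoint_subordinationMap_unique (hh₁ : IsSectorial h₁) (hh₂ : IsSectorial h₂)
    (hz : z ∈ UHP) (ha : a ∈ UHP) (hb : b ∈ UHP) (hfa : subordinationMap h₁ h₂ z a = a)
    (hfb : subordinationMap h₁ h₂ z b = b) : a = b := by
  by_contra hab
  have hz₀ : z ≠ 0 := ne_zero_of_mem_slitP (UHP_subset_slitP hz)
  have hzi : 0 ≤ z.im := le_of_lt hz
  have hd : DifferentiableOn ℂ (subordinationMap h₁ h₂ z) UHP :=
    differentiableOn_subordinationMap hh₁.differentiableOn hh₂.differentiableOn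
      (differentiableOn_const z) differentiableOn_id
      (fun _ => mul_mem_slitP_of_mem_UHP hz₀ hzi)
      (fun _ hw => UHP_subset_slitP (hh₁.mul_mem_UHP hz₀ hzi hw))
  have hid := eqOn_id_UHP_of_mapsTo_of_fixed hd
    (fun _ => subordinationMap_mem_UHP hh₁ hh₂ hz₀ hzi) ha hb hab hfa hfb
  have hw : -conj z ∈ UHP := by simpa [UHP] using hz
  exact subordinationMap_neg_conj_ne hh₁ hh₂ hz (hid hw)

end FixedPoint

/-- Subordination result for self-maps of the slit plane: given analytic
`η₁, η₂ : ℂ ∖ [0,∞) → ℂ ∖ [0,∞)` with `η_j(0−) = 0`, `π > arg η_j(z) > arg z`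
on `ℂ⁺`, and `η_j(conj z) = conj(η_j(z))`, with `h_j(z) = η_j(z)/z` and
`f(z,w) = h₂(z·h₁(z·w))`: (1) `f` is well defined on `(ℂ⁺ ∪ ℝ∖{0}) × ℂ⁺` with
values in `ℂ⁺`; (2) there is a unique analytic self-map `h` of `ℂ⁺` with
`f(z, h(z)) = h(z)` for all `z ∈ ℂ⁺`. -/
theorem second_subordination_result
    (η₁ η₂ : ℂ → ℂ)
    (hd₁ : DifferentiableOn ℂ η₁ SlitP) (hm₁ : Set.MapsTo η₁ SlitP SlitP)
    (hd₂ : DifferentiableOn ℂ η₂ SlitP) (hm₂ : Set.MapsTo η₂ SlitP SlitP)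
    (hlim₁ : Tendsto (fun x : ℝ => η₁ (Complex.ofReal x)) (𝓝[<] (0:ℝ)) (𝓝 0))
    (hlim₂ : Tendsto (fun x : ℝ => η₂ (Complex.ofReal x)) (𝓝[<] (0:ℝ)) (𝓝 0))
    (harg₁ : ∀ z : ℂ, 0 < z.im → z.arg < (η₁ z).arg ∧ (η₁ z).arg < Real.pi)
    (harg₂ : ∀ z : ℂ, 0 < z.im → z.arg < (η₂ z).arg ∧ (η₂ z).arg < Real.pi)
    (hconj₁ : ∀ z ∈ SlitP, η₁ ((starRingEnd ℂ) z) = (starRingEnd ℂ) (η₁ z))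
    (hconj₂ : ∀ z ∈ SlitP, η₂ ((starRingEnd ℂ) z) = (starRingEnd ℂ) (η₂ z)) :
    (∀ z w : ℂ, (0 < z.im ∨ (z.im = 0 ∧ z.re ≠ 0)) → w ∈ UHP →
        z * w ∈ SlitP ∧ (z * (η₁ (z * w) / (z * w))) ∈ UHP ∧
        (η₂ (z * (η₁ (z * w) / (z * w))) / (z * (η₁ (z * w) / (z * w)))) ∈ UHP) ∧
    ∃ h : ℂ → ℂ, DifferentiableOn ℂ h UHP ∧ Set.MapsTo h UHP UHP ∧
      (∀ z ∈ UHP,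
        η₂ (z * (η₁ (z * h z) / (z * h z))) / (z * (η₁ (z * h z) / (z * h z))) = h z) ∧
      (∀ h' : ℂ → ℂ, DifferentiableOn ℂ h' UHP → Set.MapsTo h' UHP UHP →
        (∀ z ∈ UHP,
          η₂ (z * (η₁ (z * h' z) / (z * h' z))) / (z * (η₁ (z * h' z) / (z * h' z))) = h' z) →
        Set.EqOn h h' UHP) := by
  have hh₁ := isSectorial_div hd₁ hm₁ hlim₁ harg₁ hconj₁
  have hh₂ := isSectorial_div hd₂ hm₂ hlim₂ harg₂ hconj₂
  refine ⟨fun z w hz hw => ?_, ?_⟩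
  · have hz₀ : z ≠ 0 := by
      rintro rfl
      simp at hz
    have hzi : 0 ≤ z.im := hz.elim le_of_lt fun h => h.1.ge
    exact ⟨mul_mem_slitP_of_mem_UHP hz₀ hzi hw, hh₁.mul_mem_UHP hz₀ hzi hw,
      hh₂.mapsTo_UHP (hh₁.mul_mem_UHP hz₀ hzi hw)⟩
  · obtain ⟨h, hh, hm, hfix⟩ := exists_differentiableOn_fixedPoint_UHP hh₁ hh₂
    exact ⟨h, hh, hm, hfix, fun h' _ hm' hfix' z hz =>
      fixedPoint_subordinationMap_unique hh₁ hh₂ hz (hm hz) (hm' hz) (hfix z hz) (hfix' z hz)⟩
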